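/- Let s and e be composable labelled transition systems, let q_s, q_s' ∈ Q_s, q_e, q_e' ∈ Q_e, and let σ ∈ (L_{s∥e}^δ)*. If q_s mutually accepts q_e over σ, then q_s ∥ q_e ==σ==> q_s' ∥ q_e' if and only if q_s ==σ↾L_s^δ==> q_s' and q_e ==σ↾L_e^δ==> q_e'. -/

import Mathlib

/-- Labels extended with the quiescence label `δ`. -/
inductive ELabel (Lab : Type) : Type
  | lab : Lab → ELabel Lab
  | delta : ELabel Lab

namespace ELabel

/-- Membership of an extended label in `𝓛^δ = 𝓛 ∪ {δ}`. -/
def inL {Lab : Type} (Ls : Set Lab) : ELabel Lab → Prop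
  | lab ℓ => ℓ ∈ Ls
  | delta => True

end ELabel

/-- A trace lies in `(𝓛^δ)*`. -/
def TraceIn {Lab : Type} (Ls : Set Lab) (σ : List (ELabel Lab)) : Prop :=
  ∀ x ∈ σ, ELabel.inL Ls x

/-- A labelled transition system.  `T q none q'` is an internal `τ`-step,
`T q (some ℓ) q'` is a step labelled `ℓ`. -/
structure LTS (Q : Type) (Lab : Type) where
  I : Set Lab
  U : Set Lab
  T : Q → Option Lab → Q → Prop
  q0 : Q

namespace LTS

variable {Q Lab : Type}

/-- The label set `L = I ∪ U`. -/
def L (M : LTS Q Lab) : Set Lab := M.I ∪ M.U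

/-- Standing assumptions on all LTSs: countable, disjoint input/output label
sets, transitions labelled within `L`, strong convergence (no infinite
`τ`-sequences), and image-finiteness. -/
def WellFormed (M : LTS Q Lab) : Prop :=
  M.I.Countable ∧ M.U.Countable ∧ Disjoint M.I M.U ∧
  (∀ q ℓ q', M.T q (some ℓ) q' → ℓ ∈ M.L) ∧
  (¬ ∃ f : ℕ → Q, ∀ n, M.T (f n) none (f (n + 1))) ∧
  (∀ q a, {q' | M.T q a q'}.Finite)

/-- A state is quiescent if neither an output nor `τ` is enabled in it. -/
def Quiescent (M : LTS Q Lab) (q : Q) : Prop :=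
  (∀ x ∈ M.U, ∀ q', ¬ M.T q (some x) q') ∧ ∀ q', ¬ M.T q none q'

/-- A single visible step `q --x--> q'` for `x ∈ L^δ`, where the quiescence
label `δ` gives a self-loop at quiescent states. -/
def VStep (M : LTS Q Lab) (q : Q) : ELabel Lab → Q → Prop
  | .lab ℓ, q' => M.T q (some ℓ) q'
  | .delta, q' => q' = q ∧ M.Quiescent q

/-- Zero or more `τ`-steps: `q ==ε==> q'`. -/
def Eps (M : LTS Q Lab) : Q → Q → Prop :=
  Relation.ReflTransGen fun a b => M.T a none b

/-- Weak transition `q ==σ==> q'` for `σ ∈ (L^δ)*`. -/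
inductive W (M : LTS Q Lab) : Q → List (ELabel Lab) → Q → Prop
  | nil {q q' : Q} : M.Eps q q' → W M q [] q'
  | snoc {q q1 q2 q' : Q} {σ : List (ELabel Lab)} {x : ELabel Lab} :
      W M q σ q1 → M.VStep q1 x q2 → M.Eps q2 q' → W M q (σ ++ [x]) q'

/-- `X after σ`, for a set of states `X`. -/
def afterSet (M : LTS Q Lab) (X : Set Q) (σ : List (ELabel Lab)) : Set Q :=
  {q' | ∃ q ∈ X, M.W q σ q'}

/-- `M after σ`, from the initial state. -/
def after (M : LTS Q Lab) (σ : List (ELabel Lab)) : Set Q :=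
  {q' | M.W M.q0 σ q'}

/-- The predicate underlying `out(q) ⊆ U ∪ {δ}`. -/
def outLabel (M : LTS Q Lab) (q : Q) : ELabel Lab → Prop
  | .lab ℓ => ℓ ∈ M.U ∧ ∃ q', M.T q (some ℓ) q'
  | .delta => M.Quiescent q

/-- `out(q)`. -/
def outq (M : LTS Q Lab) (q : Q) : Set (ELabel Lab) :=
  {x | M.outLabel q x}

/-- `in(q) = {ℓ ∈ I | q ==ℓ==>}`. -/
def inq (M : LTS Q Lab) (q : Q) : Set Lab :=
  {ℓ | ℓ ∈ M.I ∧ ∃ q', M.W q [ELabel.lab ℓ] q'}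

/-- `out(X) = ⋃_{q ∈ X} out(q)`. -/
def outSet (M : LTS Q Lab) (X : Set Q) : Set (ELabel Lab) :=
  ⋃ q ∈ X, M.outq q

/-- `in(X) = ⋂_{q ∈ X} in(q)`. -/
def inSet (M : LTS Q Lab) (X : Set Q) : Set Lab :=
  ⋂ q ∈ X, M.inq q

/-- Input-enabledness: `M` is an IOTS. -/
def InputEnabled (M : LTS Q Lab) : Prop :=
  ∀ q, ∀ ℓ ∈ M.I, ∃ q', M.W q [ELabel.lab ℓ] q'

/-- `Utraces(M)`. -/
def Utraces (M : LTS Q Lab) : Set (List (ELabel Lab)) :=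
  {σ | TraceIn M.L σ ∧ (∃ q', M.W M.q0 σ q') ∧
    ∀ σ1 ℓ σ2, σ = σ1 ++ ELabel.lab ℓ :: σ2 → ℓ ∈ M.I →
      ∀ q, M.W M.q0 σ1 q → ∃ q', M.W q [ELabel.lab ℓ] q'}

/-- An LTS is utrace-closed when every trace over `(L^δ)*` that it can
perform is a utrace. -/
def UtraceClosed (M : LTS Q Lab) : Prop :=
  ∀ σ : List (ELabel Lab), TraceIn M.L σ → (∃ q', M.W M.q0 σ q') → σ ∈ M.Utraces

end LTS

/-- `i uioco s`. -/
def Uioco {Qi Qs Lab : Type} (i : LTS Qi Lab) (s : LTS Qs Lab) : Prop :=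
  ∀ σ ∈ s.Utraces, i.outSet (i.after σ) ⊆ s.outSet (s.after σ)

/-- Composability: disjoint output label sets. -/
def Composable {Qs Qe Lab : Type} (s : LTS Qs Lab) (e : LTS Qe Lab) : Prop :=
  s.U ∩ e.U = ∅

/-- Parallel composition `s ∥ e`. -/
def par {Qs Qe Lab : Type} (s : LTS Qs Lab) (e : LTS Qe Lab) : LTS (Qs × Qe) Lab where
  I := (s.I \ e.U) ∪ (e.I \ s.U)
  U := s.U ∪ e.U
  T := fun p a p' =>
    match a with
    | none =>
        (s.T p.1 none p'.1 ∧ p'.2 = p.2) ∨ (e.T p.2 none p'.2 ∧ p'.1 = p.1)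
    | some ℓ =>
        (ℓ ∈ s.L ∧ ℓ ∉ e.L ∧ s.T p.1 (some ℓ) p'.1 ∧ p'.2 = p.2) ∨
        (ℓ ∈ e.L ∧ ℓ ∉ s.L ∧ e.T p.2 (some ℓ) p'.2 ∧ p'.1 = p.1) ∨
        (ℓ ∈ s.L ∧ ℓ ∈ e.L ∧ s.T p.1 (some ℓ) p'.1 ∧ e.T p.2 (some ℓ) p'.2)
  q0 := (s.q0, e.q0)

/-- `s accepts e`: along utraces of `s ∥ e`, every output of `e` that is an
input of `s` is (weakly) enabled in `s`. -/
def Accepts {Qs Qe Lab : Type} (s : LTS Qs Lab) (e : LTS Qe Lab) : Prop :=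
  ∀ σ ∈ (par s e).Utraces, ∀ qs qe, (par s e).W (par s e).q0 σ (qs, qe) →
    ∀ ℓ, ELabel.lab ℓ ∈ e.outq qe → ℓ ∈ s.I → ℓ ∈ s.inq qs

/-- `s mutually accepts e`. -/
def MutuallyAccepts {Qs Qe Lab : Type} (s : LTS Qs Lab) (e : LTS Qe Lab) : Prop :=
  Accepts s e ∧ Accepts e s

/-- `R` is an ecosim for `s` and `e`. -/
def IsEcosim {Qs Qe Lab : Type} (s : LTS Qs Lab) (e : LTS Qe Lab)
    (R : Set (Set Qs × Set Qe)) : Prop :=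
  (s.after [], e.after []) ∈ R ∧
  ∀ Xs Xe, (Xs, Xe) ∈ R →
    (∀ ℓ, ELabel.lab ℓ ∈ e.outSet Xe → ℓ ∈ s.I →
      ℓ ∈ s.inSet Xs ∧
        (s.afterSet Xs [ELabel.lab ℓ], e.afterSet Xe [ELabel.lab ℓ]) ∈ R) ∧
    (∀ ℓ, ELabel.lab ℓ ∈ s.outSet Xs → ℓ ∈ e.I →
      ℓ ∈ e.inSet Xe ∧
        (s.afterSet Xs [ELabel.lab ℓ], e.afterSet Xe [ELabel.lab ℓ]) ∈ R) ∧
    (∀ ℓ, (ELabel.lab ℓ ∈ e.outSet Xe ∨ ℓ ∈ e.inSet Xe) → ℓ ∉ s.L →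
      (Xs, e.afterSet Xe [ELabel.lab ℓ]) ∈ R) ∧
    (∀ ℓ, (ELabel.lab ℓ ∈ s.outSet Xs ∨ ℓ ∈ s.inSet Xs) → ℓ ∉ e.L →
      (s.afterSet Xs [ELabel.lab ℓ], Xe) ∈ R) ∧
    (∀ ℓ, ℓ ∈ s.inSet Xs → ℓ ∈ e.inSet Xe →
      (s.afterSet Xs [ELabel.lab ℓ], e.afterSet Xe [ELabel.lab ℓ]) ∈ R) ∧
    (ELabel.delta ∈ s.outSet Xs → ELabel.delta ∈ e.outSet Xe →
      (s.afterSet Xs [ELabel.delta], e.afterSet Xe [ELabel.delta]) ∈ R)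

/-- `s eco e`: there exists an ecosim for `s` and `e`. -/
def Eco {Qs Qe Lab : Type} (s : LTS Qs Lab) (e : LTS Qe Lab) : Prop :=
  ∃ R, IsEcosim s e R

/-- `R_U(s,e)`: the smallest relation closed under the given rules. -/
inductive RU {Qs Qe Lab : Type} (s : LTS Qs Lab) (e : LTS Qe Lab) :
    Set Qs → Set Qe → Prop
  | base : RU s e (s.after []) (e.after [])
  | syncOutE {Xs : Set Qs} {Xe : Set Qe} (ℓ : Lab) :
      RU s e Xs Xe → ELabel.lab ℓ ∈ e.outSet Xe → ℓ ∈ s.I →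
      RU s e (s.afterSet Xs [ELabel.lab ℓ]) (e.afterSet Xe [ELabel.lab ℓ])
  | syncOutS {Xs : Set Qs} {Xe : Set Qe} (ℓ : Lab) :
      RU s e Xs Xe → ELabel.lab ℓ ∈ s.outSet Xs → ℓ ∈ e.I →
      RU s e (s.afterSet Xs [ELabel.lab ℓ]) (e.afterSet Xe [ELabel.lab ℓ])
  | internalE {Xs : Set Qs} {Xe : Set Qe} (ℓ : Lab) :
      RU s e Xs Xe → (ELabel.lab ℓ ∈ e.outSet Xe ∨ ℓ ∈ e.inSet Xe) → ℓ ∉ s.L →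
      RU s e Xs (e.afterSet Xe [ELabel.lab ℓ])
  | internalS {Xs : Set Qs} {Xe : Set Qe} (ℓ : Lab) :
      RU s e Xs Xe → (ELabel.lab ℓ ∈ s.outSet Xs ∨ ℓ ∈ s.inSet Xs) → ℓ ∉ e.L →
      RU s e (s.afterSet Xs [ELabel.lab ℓ]) Xe
  | syncIn {Xs : Set Qs} {Xe : Set Qe} (ℓ : Lab) :
      RU s e Xs Xe → ℓ ∈ s.inSet Xs → ℓ ∈ e.inSet Xe →
      RU s e (s.afterSet Xs [ELabel.lab ℓ]) (e.afterSet Xe [ELabel.lab ℓ])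
  | qdelta {Xs : Set Qs} {Xe : Set Qe} :
      RU s e Xs Xe → ELabel.delta ∈ s.outSet Xs → ELabel.delta ∈ e.outSet Xe →
      RU s e (s.afterSet Xs [ELabel.delta]) (e.afterSet Xe [ELabel.delta])

open Classical in
/-- Projection `σ↾𝓛^δ` of a trace onto an (extended) label set: keeps `δ`
and the labels in `Ls`, removes all other labels. -/
noncomputable def projD {Lab : Type} (σ : List (ELabel Lab)) (Ls : Set Lab) :
    List (ELabel Lab) :=
  σ.filter fun x => decide (ELabel.inL Ls x)

open Classical in
/-- Projection `σ↾𝓛` of a trace of plain labels onto a label set. -/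
noncomputable def projL {Lab : Type} (σ : List Lab) (Ls : Set Lab) : List Lab :=
  σ.filter fun ℓ => decide (ℓ ∈ Ls)

open Classical in
/-- Substitution `σ[θ/δ]` of the label `θ` by the quiescence label `δ`. -/
noncomputable def substTheta {Lab : Type} (θ : Lab) (σ : List Lab) :
    List (ELabel Lab) :=
  σ.map fun ℓ => if ℓ = θ then ELabel.delta else ELabel.lab ℓ

/-- `⟨X⟩`: componentwise collection of a set of pairs of states. -/
def collect {Qs Qe : Type} (X : Set (Qs × Qe)) : Set Qs × Set Qe :=
  (Prod.fst '' X, Prod.snd '' X)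

/-- `q_s accepts q_e over σ`. -/
def AcceptsOver {Qs Qe Lab : Type} (s : LTS Qs Lab) (e : LTS Qe Lab)
    (qs : Qs) (qe : Qe) (σ : List (ELabel Lab)) : Prop :=
  ∀ σ1 σ2 : List (ELabel Lab), σ1 ++ σ2 = σ →
    ∀ (qs' : Qs) (qe' : Qe), (par s e).W (qs, qe) σ1 (qs', qe') →
      ∀ ℓ, ELabel.lab ℓ ∈ e.outq qe' → ℓ ∈ s.I → ℓ ∈ s.inq qs' ∧ ℓ ∈ e.U

/-- `q_s mutually accepts q_e over σ`. -/
def MutuallyAcceptsOver {Qs Qe Lab : Type} (s : LTS Qs Lab) (e : LTS Qe Lab)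
    (qs : Qs) (qe : Qe) (σ : List (ELabel Lab)) : Prop :=
  AcceptsOver s e qs qe σ ∧ AcceptsOver e s qe qs σ

/-- A test case: a quasi-finite tree-shaped LTS without `τ`-transitions, with
terminal states `pass` and `fail` carrying input self-loops, a special
quiescence-observation input `θ`, at most one output transition per state,
and receptive to all inputs other than `θ`. -/
structure TestCase (Qt Lab : Type) extends LTS Qt Lab where
  passS : Qt
  failS : Qt
  theta : Lab
  theta_input : theta ∈ I
  no_tau : ∀ q q', ¬ T q none q'
  tree : ∀ q, q ≠ q0 → q ≠ passS → q ≠ failS →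
    ∃! p : Qt × Option Lab, T p.1 p.2 q
  pass_loops : ∀ ℓ ∈ I, T passS (some ℓ) passS
  pass_terminal : ∀ a q', T passS a q' → q' = passS ∧ ∃ ℓ ∈ I, a = some ℓ
  fail_loops : ∀ ℓ ∈ I, T failS (some ℓ) failS
  fail_terminal : ∀ a q', T failS a q' → q' = failS ∧ ∃ ℓ ∈ I, a = some ℓ
  one_output : ∀ q ℓ ℓ' q' q'', ℓ ∈ U → ℓ' ∈ U →
    T q (some ℓ) q' → T q (some ℓ') q'' → ℓ = ℓ' ∧ q' = q''
  receptive : ∀ q, ∀ ℓ ∈ I, ℓ ≠ theta → ∃ q', T q (some ℓ) q'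

/-- Test execution `t ⫿ i` of a test case `t` with an implementation `i`. -/
def testExec {Qt Qi Lab : Type} (t : TestCase Qt Lab) (i : LTS Qi Lab) :
    LTS (Qt × Qi) Lab where
  I := ∅
  U := i.U ∪ (t.toLTS.L \ {t.theta})
  T := fun p a p' =>
    match a with
    | none => i.T p.2 none p'.2 ∧ p'.1 = p.1
    | some ℓ =>
        (ℓ ∈ i.L ∧ ℓ ∉ t.toLTS.L ∧ i.T p.2 (some ℓ) p'.2 ∧ p'.1 = p.1) ∨
        (ℓ ∈ t.toLTS.L ∧ ℓ ∉ i.L ∧ ℓ ≠ t.theta ∧ t.T p.1 (some ℓ) p'.1 ∧ p'.2 = p.2) ∨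
        (ℓ ∈ i.L ∧ ℓ ∈ t.toLTS.L ∧ t.T p.1 (some ℓ) p'.1 ∧ i.T p.2 (some ℓ) p'.2) ∨
        (ℓ = t.theta ∧ t.T p.1 (some ℓ) p'.1 ∧ p'.2 = p.2 ∧ i.Quiescent p.2)
  q0 := (t.q0, i.q0)

/-!
A step of `s ∥ e` on a label is a pair of steps of `s` and `e` in which a component idles on labels
outside its alphabet, so weak transitions on labels project to and lift from the components by
induction on the trace. On `δ`, quiescence of both components makes the pair quiescent; conversely,
if the pair is quiescent and `s` could still output `ℓ`, then `ℓ` is an input of `e` by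
composability, hence weakly enabled in `e` by acceptance, hence enabled outright since `e` has no
`τ`-step, so that `s ∥ e` could perform `ℓ` after all.
-/

namespace LTS

section WeakTransitions

variable {Q Q' Lab : Type} {M : LTS Q Lab} {N : LTS Q' Lab} {q q' q'' : Q}
  {σ : List (ELabel Lab)} {x : ELabel Lab}

theorem w_nil_iff : M.W q [] q' ↔ M.Eps q q' := by
  refine ⟨fun h => ?_, .nil⟩
  generalize hσ : [] = σ at h
  cases h with
  | nil hτ => exact hτ
  | snoc => simp at hσ

theorem w_append_singleton_iff :
    M.W q (σ ++ [x]) q' ↔ ∃ q₁ q₂, M.W q σ q₁ ∧ M.VStep q₁ x q₂ ∧ M.Eps q₂ q' := by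
  refine ⟨fun h => ?_, fun ⟨_, _, hW, hstep, hτ⟩ => .snoc hW hstep hτ⟩
  generalize hσ : σ ++ [x] = σx at h
  cases h with
  | nil => simp at hσ
  | snoc hW hstep hτ =>
    obtain ⟨rfl, hx⟩ := List.append_inj' hσ rfl
    obtain rfl := List.singleton_inj.mp hx
    exact ⟨_, _, hW, hstep, hτ⟩

theorem W.trans_eps (hW : M.W q σ q') (hτ : M.Eps q' q'') : M.W q σ q'' := by
  cases hW with
  | nil hτ' => exact .nil (hτ'.trans hτ)
  | snoc hW hstep hτ' => exact .snoc hW hstep (hτ'.trans hτ)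

theorem exists_vStep_of_w_singleton (hno_τ : ∀ q', ¬ M.T q none q') (hW : M.W q [x] q') :
    ∃ q', M.VStep q x q' := by
  obtain ⟨q₁, q₂, hW₁, hstep, -⟩ := w_append_singleton_iff (σ := []).mp hW
  rcases (w_nil_iff.mp hW₁).cases_head with rfl | ⟨q₀, hτ, -⟩
  · exact ⟨q₂, hstep⟩
  · exact absurd hτ (hno_τ q₀)

theorem W.map (f : Q → Q') (hT : ∀ q a q', M.T q a q' → N.T (f q) a (f q'))
    (hquiet : ∀ q, M.Quiescent q → N.Quiescent (f q)) (hW : M.W q σ q') :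
    N.W (f q) σ (f q') := by
  have map_eps {q q'} (hτ : M.Eps q q') : N.Eps (f q) (f q') :=
    hτ.lift f fun q q' => hT q none q'
  have map_vStep {q x q'} (hstep : M.VStep q x q') : N.VStep (f q) x (f q') := by
    cases x with
    | lab ℓ => exact hT _ _ _ hstep
    | delta => exact ⟨congrArg f hstep.1, hquiet _ hstep.2⟩
  induction hW with
  | nil hτ => exact .nil (map_eps hτ)
  | snoc _ hstep hτ ih => exact .snoc ih (map_vStep hstep) (map_eps hτ)

end WeakTransitions

section Projection

variable {Q Lab : Type} {M : LTS Q Lab} {q q' : Q} {σ : List (ELabel Lab)} {x : ELabel Lab}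

/-- The move `q → q'` of a component `M` while its environment observes `x`: a visible step of `M`
if `x ∈ L^δ`, and idling otherwise. It makes weak transitions along `σ↾L^δ` decompose uniformly in
the last label of `σ`. -/
def ProjStep (M : LTS Q Lab) (q : Q) (x : ELabel Lab) (q' : Q) : Prop :=
  (ELabel.inL M.L x ∧ M.VStep q x q') ∨ (¬ ELabel.inL M.L x ∧ q' = q)

theorem projStep_delta_iff : M.ProjStep q .delta q' ↔ q' = q ∧ M.Quiescent q := by
  simp [ProjStep, ELabel.inL, VStep]

theorem projD_append_singleton_of_inL {Ls : Set Lab} (hx : ELabel.inL Ls x) :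
    projD (σ ++ [x]) Ls = projD σ Ls ++ [x] := by
  simp [projD, hx]

theorem projD_append_singleton_of_not_inL {Ls : Set Lab} (hx : ¬ ELabel.inL Ls x) :
    projD (σ ++ [x]) Ls = projD σ Ls := by
  simp [projD, hx]

theorem w_projD_append_singleton_iff :
    M.W q (projD (σ ++ [x]) M.L) q' ↔
      ∃ q₁ q₂, M.W q (projD σ M.L) q₁ ∧ M.ProjStep q₁ x q₂ ∧ M.Eps q₂ q' := by
  by_cases hx : ELabel.inL M.L x
  · simp only [projD_append_singleton_of_inL hx, w_append_singleton_iff, ProjStep, hx, true_and,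
      not_true_eq_false, false_and, or_false]
  · simp only [projD_append_singleton_of_not_inL hx, ProjStep, hx, false_and, not_false_eq_true,
      true_and, false_or]
    constructor
    · exact fun hW => ⟨q', q', hW, rfl, .refl⟩
    · rintro ⟨q₁, _, hW, rfl, hτ⟩
      exact hW.trans_eps hτ

end Projection

section ParallelComposition

variable {Qs Qe Lab : Type} {s : LTS Qs Lab} {e : LTS Qe Lab} {p p' : Qs × Qe}
  {σ : List (ELabel Lab)} {x : ELabel Lab}

theorem par_L : (par s e).L = s.L ∪ e.L := by
  ext ℓ
  simp only [L, par, Set.mem_union, Set.mem_sdiff]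
  tauto

theorem t_par_swap {a : Option Lab} (h : (par s e).T p a p') :
    (par e s).T p.swap a p'.swap := by
  cases a <;> simp only [par, Prod.fst_swap, Prod.snd_swap] at h ⊢ <;> tauto

theorem Quiescent.par_swap (h : (par s e).Quiescent p) : (par e s).Quiescent p.swap :=
  ⟨fun ℓ hℓ p' hT => h.1 ℓ hℓ.symm p'.swap (t_par_swap hT),
    fun p' hT => h.2 p'.swap (t_par_swap hT)⟩

theorem W.par_swap (h : (par s e).W p σ p') : (par e s).W p.swap σ p'.swap :=
  h.map Prod.swap (fun _ _ _ => t_par_swap) fun _ => Quiescent.par_swap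

theorem Eps.fst_of_par (h : (par s e).Eps p p') : s.Eps p.1 p'.1 := by
  induction h with
  | refl => exact .refl
  | tail _ hτ ih =>
    rcases hτ with ⟨hτ, -⟩ | ⟨-, hidle⟩
    · exact ih.tail hτ
    · exact hidle ▸ ih

theorem eps_par (hs : s.Eps p.1 p'.1) (he : e.Eps p.2 p'.2) : (par s e).Eps p p' := by
  have move_fst : (par s e).Eps (p.1, p.2) (p'.1, p.2) :=
    hs.lift (·, p.2) fun _ _ hτ => Or.inl ⟨hτ, rfl⟩
  have move_snd : (par s e).Eps (p'.1, p.2) (p'.1, p'.2) :=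
    he.lift (p'.1, ·) fun _ _ hτ => Or.inr ⟨hτ, rfl⟩
  exact move_fst.trans move_snd

theorem t_par_some_iff {ℓ : Lab} :
    (par s e).T p (some ℓ) p' ↔
      ℓ ∈ (par s e).L ∧ s.ProjStep p.1 (.lab ℓ) p'.1 ∧ e.ProjStep p.2 (.lab ℓ) p'.2 := by
  simp only [par_L, Set.mem_union, ProjStep, ELabel.inL, VStep]
  simp only [par]
  tauto

theorem quiescent_par (hs : s.Quiescent p.1) (he : e.Quiescent p.2) :
    (par s e).Quiescent p := by
  refine ⟨fun ℓ hℓ p' hT => ?_, fun p' hτ => hτ.elim (hs.2 _ ·.1) (he.2 _ ·.1)⟩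
  obtain ⟨-, hstep_s, hstep_e⟩ := t_par_some_iff.mp hT
  rcases hℓ with hℓ | hℓ
  · exact hstep_s.elim (fun h => hs.1 ℓ hℓ _ h.2) fun h => h.1 (Or.inr hℓ)
  · exact hstep_e.elim (fun h => he.1 ℓ hℓ _ h.2) fun h => h.1 (Or.inr hℓ)

/-- Acceptance at a single pair of states: `out(q_e) ∩ I_s ⊆ in(q_s)`. It is what
`AcceptsOver` requires of every pair reached along a prefix of the trace. -/
def AcceptsAt (s : LTS Qs Lab) (e : LTS Qe Lab) (qs : Qs) (qe : Qe) : Prop :=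
  ∀ ℓ, ELabel.lab ℓ ∈ e.outq qe → ℓ ∈ s.I → ℓ ∈ s.inq qs

theorem Quiescent.fst_of_par (hcomp : Composable s e) (hacc : AcceptsAt e s p.2 p.1)
    (h : (par s e).Quiescent p) : s.Quiescent p.1 := by
  refine ⟨fun ℓ hℓ qs hT => ?_, fun qs hτ => h.2 (qs, p.2) (Or.inl ⟨hτ, rfl⟩)⟩
  suffices henv : ∃ qe, e.ProjStep p.2 (.lab ℓ) qe by
    obtain ⟨qe, hstep⟩ := henv
    exact h.1 ℓ (Or.inl hℓ) (qs, qe)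
      (t_par_some_iff.mpr ⟨Or.inr (Or.inl hℓ), Or.inl ⟨Or.inr hℓ, hT⟩, hstep⟩)
  by_cases hℓe : ℓ ∈ e.L
  · have hinput : ℓ ∈ e.I := hℓe.resolve_right fun hℓU =>
      Set.disjoint_left.mp (Set.disjoint_iff_inter_eq_empty.mpr hcomp) hℓ hℓU
    obtain ⟨-, _, hW⟩ := hacc ℓ ⟨hℓ, qs, hT⟩ hinput
    have hno_τ : ∀ qe, ¬ e.T p.2 none qe := fun qe hτ => h.2 (p.1, qe) (Or.inr ⟨hτ, rfl⟩)
    obtain ⟨qe, hstep⟩ := exists_vStep_of_w_singleton hno_τ hW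
    exact ⟨qe, Or.inl ⟨hℓe, hstep⟩⟩
  · exact ⟨p.2, Or.inr ⟨hℓe, rfl⟩⟩

theorem VStep.fst_of_par (hcomp : Composable s e) (hacc : AcceptsAt e s p.2 p.1)
    (h : (par s e).VStep p x p') : s.ProjStep p.1 x p'.1 := by
  cases x with
  | lab ℓ => exact (t_par_some_iff.mp h).2.1
  | delta =>
    obtain ⟨rfl, hquiet⟩ := h
    exact projStep_delta_iff.mpr ⟨rfl, hquiet.fst_of_par hcomp hacc⟩

theorem vStep_par_of_projStep (hx : ELabel.inL (par s e).L x) (hs : s.ProjStep p.1 x p'.1)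
    (he : e.ProjStep p.2 x p'.2) : (par s e).VStep p x p' := by
  cases x with
  | lab ℓ => exact t_par_some_iff.mpr ⟨hx, hs, he⟩
  | delta =>
    obtain ⟨hfst, hquiet_s⟩ := projStep_delta_iff.mp hs
    obtain ⟨hsnd, hquiet_e⟩ := projStep_delta_iff.mp he
    exact ⟨Prod.ext hfst hsnd, quiescent_par hquiet_s hquiet_e⟩

end ParallelComposition

end LTS

section TraceProjection

variable {Qs Qe Lab : Type} {s : LTS Qs Lab} {e : LTS Qe Lab} {qs qs' : Qs} {qe qe' : Qe}
  {p p' : Qs × Qe} {σ σ' : List (ELabel Lab)}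

theorem Composable.symm (h : Composable s e) : Composable e s :=
  (Set.inter_comm _ _).trans h

theorem AcceptsOver.of_append (h : AcceptsOver s e qs qe (σ ++ σ')) : AcceptsOver s e qs qe σ :=
  fun σ₁ σ₂ hσ => h σ₁ (σ₂ ++ σ') (by rw [← List.append_assoc, hσ])

theorem AcceptsOver.acceptsAt (h : AcceptsOver s e qs qe σ)
    (hW : (par s e).W (qs, qe) σ (qs', qe')) : LTS.AcceptsAt s e qs' qe' :=
  fun ℓ hout hin => (h σ [] (List.append_nil σ) qs' qe' hW ℓ hout hin).1

theorem LTS.W.fst_of_par (hcomp : Composable s e) (hW : (par s e).W p σ p') :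
    AcceptsOver e s p.2 p.1 σ → s.W p.1 (projD σ s.L) p'.1 := by
  induction hW with
  | nil hτ => exact fun _ => .nil (Eps.fst_of_par hτ)
  | snoc hW hstep hτ ih =>
    intro hacc
    exact w_projD_append_singleton_iff.mpr ⟨_, _, ih hacc.of_append,
      hstep.fst_of_par hcomp (hacc.of_append.acceptsAt hW.par_swap), Eps.fst_of_par hτ⟩

theorem LTS.W.snd_of_par (hcomp : Composable s e) (hW : (par s e).W p σ p')
    (hacc : AcceptsOver s e p.1 p.2 σ) : e.W p.2 (projD σ e.L) p'.2 :=
  hW.par_swap.fst_of_par hcomp.symm hacc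

theorem LTS.w_par_of_w_projD (hσ : TraceIn (par s e).L σ) (hs : s.W qs (projD σ s.L) qs')
    (he : e.W qe (projD σ e.L) qe') : (par s e).W (qs, qe) σ (qs', qe') := by
  induction σ using List.reverseRecOn generalizing qs' qe' with
  | nil => exact .nil (eps_par (w_nil_iff.mp hs) (w_nil_iff.mp he))
  | append_singleton σ x ih =>
    obtain ⟨hσ, hx⟩ := List.forall_mem_append.mp hσ
    obtain ⟨_, qs₂, hWs, hstep_s, hτs⟩ := w_projD_append_singleton_iff.mp hs
    obtain ⟨_, qe₂, hWe, hstep_e, hτe⟩ := w_projD_append_singleton_iff.mp he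
    exact .snoc (q2 := (qs₂, qe₂)) (ih hσ hWs hWe)
      (vStep_par_of_projStep (hx x List.mem_cons_self) hstep_s hstep_e) (eps_par hτs hτe)

theorem project_single_trace_from_parcomp_general (hcomp : Composable s e)
    (hσ : TraceIn (par s e).L σ) (hma : MutuallyAcceptsOver s e qs qe σ) :
    (par s e).W (qs, qe) σ (qs', qe') ↔
      s.W qs (projD σ s.L) qs' ∧ e.W qe (projD σ e.L) qe' :=
  ⟨fun hW => ⟨hW.fst_of_par hcomp hma.2, hW.snd_of_par hcomp hma.1⟩,
    fun ⟨hs, he⟩ => LTS.w_par_of_w_projD hσ hs he⟩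

end TraceProjection

/-- if `q_s` mutually accepts `q_e` over `σ`, then
`q_s ∥ q_e ==σ==> q_s' ∥ q_e'` iff `q_s ==σ↾L_s^δ==> q_s'` and
`q_e ==σ↾L_e^δ==> q_e'`. -/
theorem project_single_trace_from_parcomp {Qs Qe Lab : Type}
    (s : LTS Qs Lab) (e : LTS Qe Lab)
    (hs : s.WellFormed) (he : e.WellFormed)
    (hcomp : Composable s e)
    (qs qs' : Qs) (qe qe' : Qe)
    (σ : List (ELabel Lab)) (hσ : TraceIn (par s e).L σ)
    (hma : MutuallyAcceptsOver s e qs qe σ) :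
    (par s e).W (qs, qe) σ (qs', qe') ↔
      s.W qs (projD σ s.L) qs' ∧ e.W qe (projD σ e.L) qe' :=
  project_single_trace_from_parcomp_general hcomp hσ hma
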